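/- arXiv:1002.2925 — 2 statements merged into one kernel-verified Lean document; each statement's English description precedes it below -/
import Mathlib

section
/- Let u : [0,L] → ℝ be a twice differentiable solution of T_ε u = 0 on [0,L], u(0) = A, R_ε u = 0. Then there exists a constant C > 0 independent of ε such that |u'(x)| ≤ C [ 1 + (1/ε) e^{α(x−L)/ε} ] for all x ∈ [0,L]. -/
open Set

/-!
Two comparison arguments prove the estimate, each applied to `u` and to `-u`.

Where `0 < u`, the equation gives `-ε u'' + a u' - β u ≤ -g 0`. The exponential `exp (m x)`,
`0 < m`, is a strict supersolution of this linear operator as soon as `ε m² - α m + β < 0`, and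
`α² - 4 ε β > 0` says precisely that such `m` exist: `m = 2 β / α` is one that does not depend
on `ε`, and `m = α / (2 ε)` is one that is large enough to control the Robin condition at `L`.
A multiple of the sum of the two exponentials therefore bounds `u` uniformly in `ε`.

Once `u` is bounded, so are `g (u x)` and `ε u' L`, and `ε (u')' = a u' + g u` is a first-order
equation for `u'` whose unstable rate is at least `α / ε`. Integrating it backwards from `L` damps
the value at `L`, of order `1 / ε`, by the factor `exp (α (x - L) / ε)`.
-/

section Maximum

lemma mul_sub_nonpos_of_isMaxOn {s : Set ℝ} {w : ℝ → ℝ} {c x y : ℝ} (hs : Convex ℝ s)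
    (hx : x ∈ s) (hy : y ∈ s) (hmax : IsMaxOn w s x) (hw : HasDerivWithinAt w c s x) :
    c * (y - x) ≤ 0 := by
  have hcone := sub_mem_posTangentConeAt_of_segment_subset (hs.segment_subset hx hy)
  simpa [mul_comm] using hmax.localize.hasFDerivWithinAt_nonpos hw.hasFDerivWithinAt hcone

lemma deriv_deriv_nonpos_of_isLocalMax {w : ℝ → ℝ} {x : ℝ} (hmax : IsLocalMax w x)
    (hw : ContinuousAt w x) : deriv (deriv w) x ≤ 0 := by
  by_contra! hpos
  have hmin : IsLocalMin w x := isLocalMin_of_deriv_deriv_pos hpos hmax.deriv_eq_zero hw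
  have hconst : w =ᶠ[nhds x] fun _ => w x := by
    filter_upwards [hmax, hmin] with y hle hge using le_antisymm hle hge
  simp [hconst.deriv.deriv_eq] at hpos

/-- Serrin's sweeping principle. -/
lemma le_of_forall_not_touching {X : Type*} [TopologicalSpace X] {s : Set X} {u B : X → ℝ}
    (hs : IsCompact s) (hu : ContinuousOn u s) (hB : ContinuousOn B s)
    (hBpos : ∀ x ∈ s, 0 < B x)
    (htouch : ∀ t > 1, ∀ x ∈ s, u x = t * B x → ¬ IsMaxOn (fun y => u y - t * B y) s x) :
    ∀ x ∈ s, u x ≤ B x := by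
  intro y hy
  obtain ⟨x, hx, hmax⟩ := hs.exists_isMaxOn ⟨y, hy⟩ (hu.div hB fun x hx => (hBpos x hx).ne')
  have hratio : ∀ z ∈ s, u z ≤ u x / B x * B z := fun z hz =>
    (div_le_iff₀ (hBpos z hz)).1 (hmax hz)
  have htx : u x = u x / B x * B x := (div_mul_cancel₀ _ (hBpos x hx).ne').symm
  have hle_one : u x / B x ≤ 1 := by
    by_contra! ht
    refine htouch _ ht x hx htx fun z hz => ?_
    change u z - u x / B x * B z ≤ u x - u x / B x * B x
    linarith [hratio z hz]
  exact (hratio y hy).trans (mul_le_of_le_one_left (hBpos y hy).le hle_one)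

lemma nonpos_of_deriv_pos_of_pos {w w' : ℝ → ℝ} {l r : ℝ}
    (hw : ∀ x ∈ Icc l r, HasDerivWithinAt w (w' x) (Icc l r) x)
    (hpos : ∀ x ∈ Ico l r, 0 < w x → 0 < w' x) (hr : w r ≤ 0) :
    ∀ x ∈ Icc l r, w x ≤ 0 := by
  intro y hy
  obtain ⟨x, hx, hmax⟩ := isCompact_Icc.exists_isMaxOn ⟨y, hy⟩
    (fun x hx => (hw x hx).continuousWithinAt)
  refine (hmax hy).trans ?_
  by_contra! hwx
  have hxr : x < r := hx.2.lt_of_ne fun h => hwx.not_ge (h ▸ hr)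
  have hslope : w' x * (r - x) ≤ 0 := mul_sub_nonpos_of_isMaxOn (convex_Icc l r) hx
    (right_mem_Icc.2 (hx.1.trans hx.2)) hmax (hw x hx)
  exact hslope.not_gt (mul_pos (hpos x ⟨hx.1, hxr⟩ hwx) (sub_pos.2 hxr))

end Maximum

/-- `u'` and `u''` are the first and second derivatives of `u` on `s`, taken within `s`, hence
one-sided at the end points of an interval. -/
structure HasTwoDerivsOn (u u' u'' : ℝ → ℝ) (s : Set ℝ) : Prop where
  fst : ∀ x ∈ s, HasDerivWithinAt u (u' x) s x
  snd : ∀ x ∈ s, HasDerivWithinAt u' (u'' x) s x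

namespace HasTwoDerivsOn

variable {u u' u'' v v' v'' : ℝ → ℝ} {s : Set ℝ}

lemma continuousOn (hu : HasTwoDerivsOn u u' u'' s) : ContinuousOn u s :=
  fun x hx => (hu.fst x hx).continuousWithinAt

lemma add (hu : HasTwoDerivsOn u u' u'' s) (hv : HasTwoDerivsOn v v' v'' s) :
    HasTwoDerivsOn (fun x => u x + v x) (fun x => u' x + v' x) (fun x => u'' x + v'' x) s :=
  ⟨fun x hx => (hu.fst x hx).add (hv.fst x hx), fun x hx => (hu.snd x hx).add (hv.snd x hx)⟩

lemma sub (hu : HasTwoDerivsOn u u' u'' s) (hv : HasTwoDerivsOn v v' v'' s) :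
    HasTwoDerivsOn (fun x => u x - v x) (fun x => u' x - v' x) (fun x => u'' x - v'' x) s :=
  ⟨fun x hx => (hu.fst x hx).sub (hv.fst x hx), fun x hx => (hu.snd x hx).sub (hv.snd x hx)⟩

lemma neg (hu : HasTwoDerivsOn u u' u'' s) :
    HasTwoDerivsOn (fun x => -u x) (fun x => -u' x) (fun x => -u'' x) s :=
  ⟨fun x hx => (hu.fst x hx).neg, fun x hx => (hu.snd x hx).neg⟩

lemma const_mul (k : ℝ) (hu : HasTwoDerivsOn u u' u'' s) :
    HasTwoDerivsOn (fun x => k * u x) (fun x => k * u' x) (fun x => k * u'' x) s :=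
  ⟨fun x hx => (hu.fst x hx).const_mul k, fun x hx => (hu.snd x hx).const_mul k⟩

lemma deriv_deriv_eq (hu : HasTwoDerivsOn u u' u'' s) {x : ℝ} (hs : s ∈ nhds x) :
    deriv (deriv u) x = u'' x := by
  have hfst : deriv u =ᶠ[nhds x] u' := by
    filter_upwards [eventually_mem_nhds_iff.2 hs] with y hy
    exact ((hu.fst y (mem_of_mem_nhds hy)).hasDerivAt hy).deriv
  rw [hfst.deriv_eq, ((hu.snd x (mem_of_mem_nhds hs)).hasDerivAt hs).deriv]

lemma snd_nonpos_of_isMaxOn (hu : HasTwoDerivsOn u u' u'' s) {x : ℝ} (hs : s ∈ nhds x)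
    (hmax : IsMaxOn u s x) : u'' x ≤ 0 := by
  rw [← hu.deriv_deriv_eq hs]
  exact deriv_deriv_nonpos_of_isLocalMax (hmax.isLocalMax hs) (hu.continuousOn.continuousAt hs)

end HasTwoDerivsOn

/-- The linear operator `w ↦ -ε w'' + a w' + c w`, evaluated at `x`; the derivatives of `w` are
passed as arguments. -/
def linearOp (ε : ℝ) (a c w w' w'' : ℝ → ℝ) (x : ℝ) : ℝ :=
  -ε * w'' x + a x * w' x + c x * w x

lemma linearOp_const_mul (ε k : ℝ) (a c w w' w'' : ℝ → ℝ) (x : ℝ) :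
    linearOp ε a c (fun y => k * w y) (fun y => k * w' y) (fun y => k * w'' y) x =
      k * linearOp ε a c w w' w'' x := by
  simp only [linearOp]
  ring

lemma linearOp_add (ε : ℝ) (a c v v' v'' w w' w'' : ℝ → ℝ) (x : ℝ) :
    linearOp ε a c (fun y => v y + w y) (fun y => v' y + w' y) (fun y => v'' y + w'' y) x =
      linearOp ε a c v v' v'' x + linearOp ε a c w w' w'' x := by
  simp only [linearOp]
  ring

lemma linearOp_sub (ε : ℝ) (a c v v' v'' w w' w'' : ℝ → ℝ) (x : ℝ) :
    linearOp ε a c (fun y => v y - w y) (fun y => v' y - w' y) (fun y => v'' y - w'' y) x =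
      linearOp ε a c v v' v'' x - linearOp ε a c w w' w'' x := by
  simp only [linearOp]
  ring

/-- The coefficient `c` may be negative: a positive strict supersolution `B` replaces its sign in
the maximum principle. -/
lemma HasTwoDerivsOn.le_of_strict_supersolution {ε l r : ℝ} {a c u u' u'' B B' B'' : ℝ → ℝ}
    (hlr : l < r) (hε : 0 ≤ ε)
    (hu : HasTwoDerivsOn u u' u'' (Icc l r)) (hB : HasTwoDerivsOn B B' B'' (Icc l r))
    (hBpos : ∀ x ∈ Icc l r, 0 < B x)
    (hopB : ∀ x ∈ Ioo l r, 0 ≤ linearOp ε a c B B' B'' x)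
    (hop : ∀ x ∈ Ioo l r, 0 < u x → linearOp ε a c u u' u'' x < linearOp ε a c B B' B'' x)
    (hleft : u l ≤ B l) (hrightB : 0 ≤ B' r) (hright : 0 < u r → u' r < B' r) :
    ∀ x ∈ Icc l r, u x ≤ B x := by
  refine le_of_forall_not_touching isCompact_Icc hu.continuousOn hB.continuousOn hBpos ?_
  intro t ht x hx htx hmax
  have hw := hu.sub (hB.const_mul t)
  have hux : 0 < u x := htx ▸ mul_pos (one_pos.trans ht) (hBpos x hx)
  have hslope : ∀ y ∈ Icc l r, (u' x - t * B' x) * (y - x) ≤ 0 := fun y hy =>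
    mul_sub_nonpos_of_isMaxOn (convex_Icc l r) hx hy hmax (hw.fst x hx)
  have hxl : l < x := hx.1.lt_of_ne fun h => by
    subst h
    exact (htx ▸ lt_mul_of_one_lt_left (hBpos _ hx) ht).not_ge hleft
  have hfst_nonneg : 0 ≤ u' x - t * B' x :=
    nonneg_of_mul_nonpos_left (hslope l (left_mem_Icc.2 hlr.le)) (sub_neg.2 hxl)
  rcases hx.2.eq_or_lt with rfl | hxr
  · exact absurd (hright hux) (by linarith [le_mul_of_one_le_left hrightB ht.le])
  · have hfst : u' x - t * B' x = 0 := hfst_nonneg.antisymm' <|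
      nonpos_of_mul_nonpos_left (hslope r (right_mem_Icc.2 hlr.le)) (sub_pos.2 hxr)
    have hsnd : u'' x - t * B'' x ≤ 0 := hw.snd_nonpos_of_isMaxOn (Icc_mem_nhds hxl hxr) hmax
    have hopw : 0 ≤ linearOp ε a c u u' u'' x - t * linearOp ε a c B B' B'' x := by
      rw [← linearOp_const_mul, ← linearOp_sub, linearOp, hfst, htx]
      linarith [mul_nonpos_of_nonneg_of_nonpos hε hsnd]
    linarith [hop x ⟨hxl, hxr⟩ hux, le_mul_of_one_le_left (hopB x ⟨hxl, hxr⟩) ht.le]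

section Exponentials

lemma hasTwoDerivsOn_exp (m z : ℝ) (s : Set ℝ) :
    HasTwoDerivsOn (fun x => Real.exp (m * (x - z))) (fun x => m * Real.exp (m * (x - z)))
      (fun x => m * (m * Real.exp (m * (x - z)))) s := by
  have hexp : ∀ x, HasDerivWithinAt (fun x => Real.exp (m * (x - z)))
      (m * Real.exp (m * (x - z))) s x := fun x => by
    simpa [mul_comm] using
      (((hasDerivAt_id x).sub_const z).const_mul m).exp.hasDerivWithinAt (s := s)
  exact ⟨fun x _ => hexp x, fun x _ => (hexp x).const_mul m⟩

lemma linearOp_exp (ε m z : ℝ) (a c : ℝ → ℝ) (x : ℝ) :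
    linearOp ε a c (fun y => Real.exp (m * (y - z))) (fun y => m * Real.exp (m * (y - z)))
        (fun y => m * (m * Real.exp (m * (y - z)))) x =
      (-ε * m ^ 2 + a x * m + c x) * Real.exp (m * (x - z)) := by
  simp only [linearOp]
  ring

lemma le_charPoly_two_mul_div {α β γ ε b : ℝ} (hα : 0 < α) (hβ : 0 ≤ β)
    (hdisc : γ ≤ α ^ 2 - 4 * ε * β) (hb : α ≤ b) :
    β * γ / α ^ 2 ≤ -ε * (2 * β / α) ^ 2 + b * (2 * β / α) - β := by
  calc β * γ / α ^ 2 ≤ β * (α ^ 2 - 4 * ε * β) / α ^ 2 := by gcongr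
    _ = -ε * (2 * β / α) ^ 2 + α * (2 * β / α) - β := by field_simp; ring
    _ ≤ -ε * (2 * β / α) ^ 2 + b * (2 * β / α) - β := by gcongr

lemma charPoly_vertex_nonneg {α β ε b : ℝ} (hα : 0 ≤ α) (hε : 0 < ε)
    (hdisc : 0 ≤ α ^ 2 - 4 * ε * β) (hb : α ≤ b) :
    0 ≤ -ε * (α / (2 * ε)) ^ 2 + b * (α / (2 * ε)) - β := by
  calc 0 ≤ (α ^ 2 - 4 * ε * β) / (4 * ε) := by positivity
    _ = -ε * (α / (2 * ε)) ^ 2 + α * (α / (2 * ε)) - β := by field_simp; ring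
    _ ≤ -ε * (α / (2 * ε)) ^ 2 + b * (α / (2 * ε)) - β := by gcongr

lemma exists_supersolution {L α β γ ε : ℝ} {a : ℝ → ℝ} (hα : 0 < α) (hβ : 0 ≤ β) (hγ : 0 ≤ γ)
    (hε : 0 < ε) (hdisc : γ ≤ α ^ 2 - 4 * ε * β) (ha : ∀ x ∈ Icc 0 L, α ≤ a x) :
    ∃ B B' B'' : ℝ → ℝ, HasTwoDerivsOn B B' B'' (Icc 0 L) ∧
      (∀ x ∈ Icc 0 L, 1 ≤ B x ∧ B x ≤ Real.exp (2 * β / α * L) + 1) ∧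
      (∀ x ∈ Icc 0 L, β * γ / α ^ 2 ≤ linearOp ε a (fun _ => -β) B B' B'' x) ∧
      α / 2 ≤ ε * B' L := by
  have hone_le : ∀ x ∈ Icc 0 L, 1 ≤ Real.exp (2 * β / α * (x - 0)) := fun x hx =>
    Real.one_le_exp (mul_nonneg (by positivity) (sub_nonneg.2 hx.1))
  refine ⟨_, _, _, (hasTwoDerivsOn_exp (2 * β / α) 0 _).add (hasTwoDerivsOn_exp (α / (2 * ε)) L _),
    fun x hx => ⟨?_, ?_⟩, fun x hx => ?_, ?_⟩
  · exact (hone_le x hx).trans (le_add_of_nonneg_right (Real.exp_pos _).le)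
  · have hslow : Real.exp (2 * β / α * (x - 0)) ≤ Real.exp (2 * β / α * L) := by
      rw [sub_zero]
      gcongr
      exact hx.2
    have hfast : Real.exp (α / (2 * ε) * (x - L)) ≤ 1 :=
      Real.exp_le_one_iff.2 (mul_nonpos_of_nonneg_of_nonpos (by positivity) (sub_nonpos.2 hx.2))
    exact add_le_add hslow hfast
  · have hrate : 0 ≤ β * γ / α ^ 2 := by positivity
    have hslow := le_charPoly_two_mul_div hα hβ hdisc (ha x hx)
    have hfast := charPoly_vertex_nonneg hα.le hε (hγ.trans hdisc) (ha x hx)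
    simp only [linearOp_add, linearOp_exp, ← sub_eq_add_neg]
    exact (hslow.trans (le_mul_of_one_le_right (hrate.trans hslow) (hone_le x hx))).trans
      (le_add_of_nonneg_right (mul_nonneg hfast (Real.exp_pos _).le))
  · have hfast : ε * (α / (2 * ε)) = α / 2 := by field_simp
    have hslow : 0 ≤ ε * (2 * β / α * Real.exp (2 * β / α * (L - 0))) := by positivity
    rw [sub_self, mul_zero, Real.exp_zero, mul_one, mul_add, hfast]
    exact le_add_of_nonneg_left hslow

lemma le_of_first_order_boundary_layer {L α ε G F : ℝ} {v v' : ℝ → ℝ} (hα : 0 < α) (hε : 0 < ε)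
    (hG : 0 ≤ G) (hF : 0 ≤ F) (hv : ∀ x ∈ Icc 0 L, HasDerivWithinAt v (v' x) (Icc 0 L) x)
    (hode : ∀ x ∈ Ico 0 L, 0 < v x → α * v x - G ≤ ε * v' x) (hL : ε * v L ≤ F) :
    ∀ x ∈ Icc 0 L, v x ≤ G / α + F / ε * Real.exp (α / ε * (x - L)) := by
  set b : ℝ → ℝ := fun x => G / α + F / ε * Real.exp (α / ε * (x - L)) with hb
  set b' : ℝ → ℝ := fun x => F / ε * (α / ε * Real.exp (α / ε * (x - L))) with hb'
  have hbd : ∀ x ∈ Icc 0 L, HasDerivWithinAt b (b' x) (Icc 0 L) x := fun x hx =>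
    (((hasTwoDerivsOn_exp (α / ε) L _).fst x hx).const_mul (F / ε)).const_add (G / α)
  have hb_nonneg : ∀ x, 0 ≤ b x := fun x => by positivity
  have hb_ode : ∀ x, ε * b' x = α * b x - G := fun x => by
    simp only [hb, hb']
    field_simp
    ring
  have hbL : v L ≤ b L := by
    have hvL : v L ≤ F / ε := by rwa [le_div_iff₀' hε]
    have hGα : 0 ≤ G / α := by positivity
    simp only [hb, sub_self, mul_zero, Real.exp_zero, mul_one]
    linarith
  intro x hx
  refine sub_nonpos.1 (nonpos_of_deriv_pos_of_pos (fun y hy => (hv y hy).sub (hbd y hy)) ?_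
    (sub_nonpos.2 hbL) x hx)
  intro y hy (hpos : 0 < v y - b y)
  have hode_y := hode y hy (by linarith [hb_nonneg y])
  have hmul : 0 < ε * (v' y - b' y) := by linarith [hb_ode y, mul_pos hα hpos]
  exact pos_of_mul_pos_right hmul hε.le

end Exponentials

section Monotone

lemma monotone_neg_comp_neg {h : ℝ → ℝ} (hh : Monotone h) : Monotone fun s => -h (-s) :=
  fun _ _ hst => neg_le_neg (hh (neg_le_neg hst))

lemma monotone_add_mul_of_neg_le_deriv {g : ℝ → ℝ} {β : ℝ} (hg : Differentiable ℝ g)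
    (hg' : ∀ s, -β ≤ deriv g s) : Monotone fun s => g s + β * s := by
  have hderiv : ∀ s, HasDerivAt (fun s => g s + β * s) (deriv g s + β) s := fun s => by
    simpa using (hg s).hasDerivAt.fun_add ((hasDerivAt_id s).const_mul β)
  refine monotone_of_deriv_nonneg (fun s => (hderiv s).differentiableAt) fun s => ?_
  rw [(hderiv s).deriv]
  linarith [hg' s]

lemma exists_abs_le_of_monotone_add_mul {h : ℝ → ℝ} {β : ℝ}
    (hh : Monotone fun s => h s + β * s) (M : ℝ) :
    ∃ H, ∀ s, |s| ≤ M → |h s| ≤ H := by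
  refine ⟨max |h (-M) + β * -M| |h M + β * M| + |β| * M, fun s hs => ?_⟩
  have hsum : |h s + β * s| ≤ max |h (-M) + β * -M| |h M + β * M| :=
    abs_le_max_abs_abs (hh (abs_le.1 hs).1) (hh (abs_le.1 hs).2)
  calc |h s| = |h s + β * s - β * s| := by rw [add_sub_cancel_right]
    _ ≤ |h s + β * s| + |β| * |s| := (abs_sub _ _).trans_eq (by rw [abs_mul])
    _ ≤ max |h (-M) + β * -M| |h M + β * M| + |β| * M := by gcongr

end Monotone

/-- `u`, with derivatives `u'` and `u''` on `[0, L]`, solves `T_ε u = 0`, `u 0 = A`, `R_ε u = 0`. -/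
structure IsSolution (L ε A : ℝ) (a g f u u' u'' : ℝ → ℝ) : Prop
    extends HasTwoDerivsOn u u' u'' (Icc 0 L) where
  ode : ∀ x ∈ Icc 0 L, -ε * u'' x + a x * u' x + g (u x) = 0
  dirichlet : u 0 = A
  robin : ε * u' L + f (u L) = 0

namespace IsSolution

variable {L ε A : ℝ} {a g f u u' u'' : ℝ → ℝ}

lemma neg (h : IsSolution L ε A a g f u u' u'') :
    IsSolution L ε (-A) a (fun s => -g (-s)) (fun s => -f (-s))
      (fun x => -u x) (fun x => -u' x) (fun x => -u'' x) where
  toHasTwoDerivsOn := h.toHasTwoDerivsOn.neg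
  ode x hx := by
    rw [neg_neg]
    linarith [h.ode x hx]
  dirichlet := by rw [h.dirichlet]
  robin := by
    rw [neg_neg]
    linarith [h.robin]

lemma le {α β γ K : ℝ} (hL : 0 < L) (hα : 0 < α) (hβ : 0 ≤ β) (hγ : 0 ≤ γ) (hε : 0 < ε)
    (hdisc : γ ≤ α ^ 2 - 4 * ε * β) (ha : ∀ x ∈ Icc 0 L, α ≤ a x)
    (hg : Monotone fun s => g s + β * s) (hf : Monotone f) (hK : 0 < K) (hKA : A ≤ K)
    (hKg : -g 0 < K * (β * γ / α ^ 2)) (hKf : -f 0 < K * (α / 2))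
    (h : IsSolution L ε A a g f u u' u'') :
    ∀ x ∈ Icc 0 L, u x ≤ K * (Real.exp (2 * β / α * L) + 1) := by
  obtain ⟨B, B', B'', hB, hBbd, hopB, hB'⟩ := exists_supersolution hα hβ hγ hε hdisc ha
  have hrate : 0 ≤ β * γ / α ^ 2 := by positivity
  have hB'L : 0 ≤ B' L := (pos_of_mul_pos_right ((half_pos hα).trans_le hB') hε.le).le
  have hcomp : ∀ x ∈ Icc 0 L, u x ≤ K * B x := by
    refine h.le_of_strict_supersolution hL hε.le (hB.const_mul K) (a := a) (c := fun _ => -β)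
      (fun x hx => mul_pos hK (one_pos.trans_le (hBbd x hx).1)) (fun x hx => ?_)
      (fun x hx hux => ?_) ?_ (mul_nonneg hK.le hB'L) (fun huL => ?_)
    · rw [linearOp_const_mul]
      exact mul_nonneg hK.le (hrate.trans (hopB x (Ioo_subset_Icc_self hx)))
    · have hgu : g 0 + β * 0 ≤ g (u x) + β * u x := hg hux.le
      calc linearOp ε a (fun _ => -β) u u' u'' x ≤ -g 0 := by
            rw [linearOp]
            linarith [h.ode x (Ioo_subset_Icc_self hx)]
        _ < K * (β * γ / α ^ 2) := hKg
        _ ≤ _ := by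
            rw [linearOp_const_mul]
            exact mul_le_mul_of_nonneg_left (hopB x (Ioo_subset_Icc_self hx)) hK.le
    · rw [h.dirichlet]
      exact hKA.trans (le_mul_of_one_le_right hK.le (hBbd 0 (left_mem_Icc.2 hL.le)).1)
    · refine lt_of_mul_lt_mul_left ?_ hε.le
      linarith [h.robin, hf huL.le, mul_le_mul_of_nonneg_left hB' hK.le]
  exact fun x hx => (hcomp x hx).trans (mul_le_mul_of_nonneg_left (hBbd x hx).2 hK.le)

lemma exists_uniform_bound {α β γ : ℝ} (A : ℝ) (hL : 0 < L) (hα : 0 < α) (hβ : 0 < β)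
    (hγ : 0 < γ) (ha : ∀ x ∈ Icc 0 L, α ≤ a x) (hg : Monotone fun s => g s + β * s)
    (hf : Monotone f) :
    ∃ M, ∀ ε > 0, γ ≤ α ^ 2 - 4 * ε * β → ∀ u u' u'', IsSolution L ε A a g f u u' u'' →
      ∀ x ∈ Icc 0 L, |u x| ≤ M := by
  have hrate : 0 < β * γ / α ^ 2 := by positivity
  obtain ⟨K, hK⟩ := exists_gt (max |A| (max (|g 0| / (β * γ / α ^ 2)) (|f 0| / (α / 2))))
  simp only [max_lt_iff, div_lt_iff₀ hrate, div_lt_iff₀ (half_pos hα)] at hK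
  obtain ⟨hKA, hKg, hKf⟩ := hK
  have hK_pos : 0 < K := (abs_nonneg A).trans_lt hKA
  have hg_neg : Monotone fun s => -g (-s) + β * s := by
    simpa [add_comm] using monotone_neg_comp_neg hg
  refine ⟨_, fun ε hε hdisc u u' u'' h x hx => abs_le'.2
    ⟨h.le hL hα hβ.le hγ.le hε hdisc ha hg hf hK_pos (le_of_abs_le hKA.le)
        ((neg_le_abs _).trans_lt hKg) ((neg_le_abs _).trans_lt hKf) x hx,
      h.neg.le hL hα hβ.le hγ.le hε hdisc ha hg_neg (monotone_neg_comp_neg hf) hK_pos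
        ((neg_le_abs A).trans hKA.le) ?_ ?_ x hx⟩⟩
  · simpa using (le_abs_self _).trans_lt hKg
  · simpa using (le_abs_self _).trans_lt hKf

lemma deriv_le {α G F : ℝ} (hL : 0 ≤ L) (hα : 0 < α) (hε : 0 < ε) (ha : ∀ x ∈ Icc 0 L, α ≤ a x)
    (h : IsSolution L ε A a g f u u' u'') (hG : ∀ x ∈ Icc 0 L, |g (u x)| ≤ G)
    (hF : |f (u L)| ≤ F) :
    ∀ x ∈ Icc 0 L, u' x ≤ G / α + F / ε * Real.exp (α / ε * (x - L)) := by
  have hG_nonneg : 0 ≤ G := (abs_nonneg _).trans (hG 0 (left_mem_Icc.2 hL))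
  refine le_of_first_order_boundary_layer hα hε hG_nonneg ((abs_nonneg _).trans hF) h.snd ?_ ?_
  · intro x hx hpos
    have hxI := Ico_subset_Icc_self hx
    linarith [h.ode x hxI, neg_le_of_abs_le (hG x hxI),
      mul_le_mul_of_nonneg_right (ha x hxI) hpos.le]
  · linarith [h.robin, neg_le_of_abs_le hF]

lemma abs_deriv_le {α G F : ℝ} (hL : 0 ≤ L) (hα : 0 < α) (hε : 0 < ε)
    (ha : ∀ x ∈ Icc 0 L, α ≤ a x) (h : IsSolution L ε A a g f u u' u'')
    (hG : ∀ x ∈ Icc 0 L, |g (u x)| ≤ G) (hF : |f (u L)| ≤ F) :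
    ∀ x ∈ Icc 0 L, |u' x| ≤ G / α + F / ε * Real.exp (α / ε * (x - L)) := fun x hx =>
  abs_le'.2 ⟨h.deriv_le hL hα hε ha hG hF x hx,
    h.neg.deriv_le hL hα hε ha (by simpa using hG) (by simpa using hF) x hx⟩

end IsSolution

theorem statement7_general {L α β γ : ℝ} (A : ℝ) (hL : 0 < L) (hα : 0 < α) (hβ : 0 < β)
    (hγ : 0 < γ) {a g f : ℝ → ℝ} (ha : ∀ x ∈ Icc 0 L, α ≤ a x)
    (hg : Monotone fun s => g s + β * s) (hf : Monotone f) :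
    ∃ C > 0, ∀ ε > 0, γ ≤ α ^ 2 - 4 * ε * β →
      ∀ u u' u'', IsSolution L ε A a g f u u' u'' →
        ∀ x ∈ Icc 0 L, |u' x| ≤ C * (1 + 1 / ε * Real.exp (α * (x - L) / ε)) := by
  obtain ⟨M, hM⟩ := IsSolution.exists_uniform_bound A hL hα hβ hγ ha hg hf
  obtain ⟨G, hG⟩ := exists_abs_le_of_monotone_add_mul hg M
  obtain ⟨F, hF⟩ := exists_abs_le_of_monotone_add_mul (h := f) (β := 0) (by simpa using hf) M
  refine ⟨max 1 (max (G / α) F), by positivity, fun ε hε hdisc u u' u'' h x hx => ?_⟩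
  have hu := hM ε hε hdisc u u' u'' h
  calc |u' x| ≤ G / α + F / ε * Real.exp (α / ε * (x - L)) :=
        h.abs_deriv_le hL.le hα hε ha (fun y hy => hG _ (hu y hy))
          (hF _ (hu L (right_mem_Icc.2 hL.le))) x hx
    _ = G / α + F * (1 / ε * Real.exp (α * (x - L) / ε)) := by ring_nf
    _ ≤ max 1 (max (G / α) F) + max 1 (max (G / α) F) * (1 / ε * Real.exp (α * (x - L) / ε)) := by
        gcongr <;> simp
    _ = max 1 (max (G / α) F) * (1 + 1 / ε * Real.exp (α * (x - L) / ε)) := by ring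

/-- Derivative estimate exhibiting the exponential boundary layer: there is a
constant `C > 0` independent of `ε` such that any twice differentiable solution
`u` of `T_ε u = 0`, `u 0 = A`, `R_ε u = 0` satisfies
`|u' x| ≤ C (1 + (1/ε) exp (α (x - L) / ε))` on `[0, L]`. -/
theorem statement7 (L α β γ A : ℝ) (hL : 0 < L)
    (hα : 0 < α) (hβ : 0 < β) (hγ : 0 < γ)
    (a g f : ℝ → ℝ)
    (ha : ContDiffOn ℝ 1 a (Icc 0 L)) (haα : ∀ x ∈ Icc 0 L, α ≤ a x)
    (hg : ContDiff ℝ 2 g) (hgβ : ∀ s : ℝ, -β ≤ deriv g s)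
    (hf : ContDiff ℝ 1 f) (hf0 : ∀ s : ℝ, 0 ≤ deriv f s) :
    ∃ C > (0 : ℝ), ∀ ε ∈ Ioc (0 : ℝ) 1,
      γ ≤ α ^ 2 - 4 * ε * β →
      ∀ u : ℝ → ℝ,
        (∀ x ∈ Icc 0 L, DifferentiableAt ℝ u x) →
        (∀ x ∈ Icc 0 L, DifferentiableAt ℝ (deriv u) x) →
        (∀ x ∈ Icc 0 L,
          -ε * deriv (deriv u) x + a x * deriv u x + g (u x) = 0) →
        u 0 = A →
        ε * deriv u L + f (u L) = 0 →
        ∀ x ∈ Icc 0 L,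
          |deriv u x| ≤ C * (1 + (1 / ε) * Real.exp (α * (x - L) / ε)) := by
  obtain ⟨C, hC, hbound⟩ := statement7_general A hL hα hβ hγ haα
    (monotone_add_mul_of_neg_le_deriv (hg.differentiable (by norm_num)) hgβ)
    (monotone_of_deriv_nonneg (hf.differentiable (by norm_num)) hf0)
  exact ⟨C, hC, fun ε hε hdisc u hu hu' hode hdir hrobin => hbound ε hε.1 hdisc u _ _
    { fst := fun x hx => (hu x hx).hasDerivAt.hasDerivWithinAt
      snd := fun x hx => (hu' x hx).hasDerivAt.hasDerivWithinAt
      ode := hode, dirichlet := hdir, robin := hrobin }⟩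
end

section
/- Let u : [0,1] → ℝ be a twice differentiable solution of (ε + x)² u''(x) − f(x, u(x)) = 0 on [0,1] with u(0) = A and u(1) = B. Then sup_{x∈[0,1]} |u(x)| ≤ max(|A|, |B|, (1/α) sup_{x∈[0,1]} |f(x, 0)|). -/
open Set

/-!
If `u` exceeded `M := max |u a| |u b| (sup |f(·, 0)| / α)` somewhere, it would do so at an interior
maximum `p`. There `f(p, u p) ≥ f(p, 0) + α u(p) > f(p, 0) + α M ≥ 0`, so the equation forces
`u''(p) > 0`, which is impossible at a maximum. The lower bound is the upper bound for `-u`, which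
solves the same kind of equation with `f` replaced by `-f(x, -s)`.
-/

section MaximumPrinciple

open scoped Topology

variable {v v' : ℝ → ℝ}

lemma second_deriv_nonpos_of_isLocalMax {p c : ℝ} (hmax : IsLocalMax v p)
    (hv' : ∀ᶠ x in 𝓝 p, HasDerivAt v (v' x) x) (hv'' : HasDerivAt v' c p) : c ≤ 0 := by
  have hderiv : deriv v =ᶠ[𝓝 p] v' := hv'.mono fun _ hx => hx.deriv
  have hc : deriv (deriv v) p = c := hderiv.deriv_eq.trans hv''.deriv
  by_contra! hpos
  have hmin : IsLocalMin v p :=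
    isLocalMin_of_deriv_deriv_pos (hc ▸ hpos) hmax.deriv_eq_zero hv'.self_of_nhds.continuousAt
  have hconst : v =ᶠ[𝓝 p] fun _ => v p := by
    filter_upwards [hmax, hmin] with x using le_antisymm
  have hc0 : deriv (deriv v) p = 0 := by
    simpa only [deriv_const', deriv_const] using hconst.deriv.deriv_eq
  exact hpos.ne' (hc.symm.trans hc0)

lemma le_of_second_deriv_pos_of_lt {v'' : ℝ → ℝ} {a b M : ℝ}
    (hv : ContinuousOn v (Icc a b))
    (hv' : ∀ x ∈ Ioo a b, HasDerivAt v (v' x) x)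
    (hv'' : ∀ x ∈ Ioo a b, HasDerivAt v' (v'' x) x)
    (hpos : ∀ x ∈ Ioo a b, M < v x → 0 < v'' x)
    (ha : v a ≤ M) (hb : v b ≤ M) : ∀ x ∈ Icc a b, v x ≤ M := by
  intro x hx
  obtain ⟨p, hp, hmax⟩ := isCompact_Icc.exists_isMaxOn ⟨x, hx⟩ hv
  refine (hmax hx).trans ?_
  by_contra! hMp
  have hp_int : p ∈ Ioo a b :=
    ⟨hp.1.lt_of_ne (by rintro rfl; exact hMp.not_ge ha),
      hp.2.lt_of_ne (by rintro rfl; exact hMp.not_ge hb)⟩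
  have hloc : IsLocalMax v p := hmax.isLocalMax (Icc_mem_nhds hp_int.1 hp_int.2)
  have hderiv : ∀ᶠ y in 𝓝 p, HasDerivAt v (v' y) y :=
    Filter.eventually_of_mem (isOpen_Ioo.mem_nhds hp_int) hv'
  exact (hpos p hp_int hMp).not_ge
    (second_deriv_nonpos_of_isLocalMax hloc hderiv (hv'' p hp_int))

end MaximumPrinciple

lemma monotone_sub_mul_of_le_deriv {g : ℝ → ℝ} {α : ℝ} (hg : Differentiable ℝ g)
    (hα : ∀ s, α ≤ deriv g s) : Monotone fun s => g s - α * s := by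
  intro s t hst
  have := mul_sub_le_image_sub_of_le_deriv hg hα hst
  dsimp only
  linarith

section APrioriBound

variable {a b α : ℝ} {f : ℝ → ℝ → ℝ} {w u u' u'' : ℝ → ℝ}

lemma le_of_subsolution {M : ℝ} (hα : 0 < α)
    (hf : ∀ x ∈ Ioo a b, Monotone fun s => f x s - α * s)
    (hw : ∀ x ∈ Ioo a b, 0 ≤ w x)
    (hu : ContinuousOn u (Icc a b))
    (hu' : ∀ x ∈ Ioo a b, HasDerivAt u (u' x) x)
    (hu'' : ∀ x ∈ Ioo a b, HasDerivAt u' (u'' x) x)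
    (hsub : ∀ x ∈ Ioo a b, f x (u x) ≤ w x * u'' x)
    (hM : 0 ≤ M) (hfM : ∀ x ∈ Ioo a b, -f x 0 ≤ α * M)
    (ha : u a ≤ M) (hb : u b ≤ M) : ∀ x ∈ Icc a b, u x ≤ M := by
  refine le_of_second_deriv_pos_of_lt hu hu' hu'' (fun x hx hMu => ?_) ha hb
  have hmono : f x 0 - α * 0 ≤ f x (u x) - α * u x := hf x hx (hM.trans hMu.le)
  have hstrict : α * M < α * u x := mul_lt_mul_of_pos_left hMu hα
  have hwu : 0 < w x * u'' x := by linarith [hfM x hx, hsub x hx]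
  exact pos_of_mul_pos_right hwu (hw x hx)

lemma neg_le_of_supersolution {M : ℝ} (hα : 0 < α)
    (hf : ∀ x ∈ Ioo a b, Monotone fun s => f x s - α * s)
    (hw : ∀ x ∈ Ioo a b, 0 ≤ w x)
    (hu : ContinuousOn u (Icc a b))
    (hu' : ∀ x ∈ Ioo a b, HasDerivAt u (u' x) x)
    (hu'' : ∀ x ∈ Ioo a b, HasDerivAt u' (u'' x) x)
    (hsuper : ∀ x ∈ Ioo a b, w x * u'' x ≤ f x (u x))
    (hM : 0 ≤ M) (hfM : ∀ x ∈ Ioo a b, f x 0 ≤ α * M)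
    (ha : -M ≤ u a) (hb : -M ≤ u b) : ∀ x ∈ Icc a b, -M ≤ u x := by
  have hreflected (x) (hx : x ∈ Ioo a b) : Monotone fun s => -f x (-s) - α * s := by
    intro s t hst
    have := hf x hx (neg_le_neg hst)
    dsimp only at this ⊢
    linarith
  have hneg : ∀ x ∈ Icc a b, -u x ≤ M := by
    refine le_of_subsolution (f := fun x s => -f x (-s)) hα hreflected hw hu.neg
      (fun x hx => (hu' x hx).neg) (fun x hx => (hu'' x hx).neg) (fun x hx => ?_) hM
      (fun x hx => ?_) (neg_le.mp ha) (neg_le.mp hb)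
    · simpa only [neg_neg, mul_neg] using neg_le_neg (hsuper x hx)
    · simpa only [neg_neg, neg_zero] using hfM x hx
  exact fun x hx => neg_le.mp (hneg x hx)

theorem statement11_general (hα : 0 < α)
    (hf : ∀ x ∈ Ioo a b, Monotone fun s => f x s - α * s)
    (hf0 : BddAbove ((fun x => |f x 0|) '' Icc a b))
    (hw : ∀ x ∈ Ioo a b, 0 ≤ w x)
    (hu : ContinuousOn u (Icc a b))
    (hu' : ∀ x ∈ Ioo a b, HasDerivAt u (u' x) x)
    (hu'' : ∀ x ∈ Ioo a b, HasDerivAt u' (u'' x) x)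
    (heq : ∀ x ∈ Ioo a b, w x * u'' x - f x (u x) = 0) :
    ∀ x ∈ Icc a b,
      |u x| ≤ max |u a| (max |u b| ((1 / α) * sSup ((fun y => |f y 0|) '' Icc a b))) := by
  set S := sSup ((fun y => |f y 0|) '' Icc a b)
  set M := max |u a| (max |u b| ((1 / α) * S))
  have hMa : |u a| ≤ M := le_max_left ..
  have hMb : |u b| ≤ M := (le_max_left ..).trans (le_max_right ..)
  have hM : 0 ≤ M := (abs_nonneg _).trans hMa
  have hSM : S ≤ α * M := by
    rw [← div_le_iff₀' hα, div_eq_inv_mul, ← one_div]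
    exact (le_max_right ..).trans (le_max_right ..)
  have hfM (x) (hx : x ∈ Ioo a b) : |f x 0| ≤ α * M :=
    (le_csSup hf0 (mem_image_of_mem _ (Ioo_subset_Icc_self hx))).trans hSM
  have hupper : ∀ x ∈ Icc a b, u x ≤ M :=
    le_of_subsolution hα hf hw hu hu' hu'' (fun x hx => (sub_eq_zero.mp (heq x hx)).ge) hM
      (fun x hx => (neg_le_abs _).trans (hfM x hx)) (le_of_abs_le hMa) (le_of_abs_le hMb)
  have hlower : ∀ x ∈ Icc a b, -M ≤ u x :=
    neg_le_of_supersolution hα hf hw hu hu' hu'' (fun x hx => (sub_eq_zero.mp (heq x hx)).le) hM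
      (fun x hx => (le_abs_self _).trans (hfM x hx)) (neg_le_of_abs_le hMa) (neg_le_of_abs_le hMb)
  exact fun x hx => abs_le.mpr ⟨hlower x hx, hupper x hx⟩

end APrioriBound

/-- Boundedness of solutions of `(ε + x)² u'' = f (x, u)` on `[0,1]` with
`u 0 = A`, `u 1 = B` and `∂f/∂u ≥ α > 0`:
`sup |u| ≤ max (|A|, |B|, (1/α) sup |f(x, 0)|)`. -/
theorem statement11 (ε α A B : ℝ) (hε : ε ∈ Ioc (0 : ℝ) 1) (hα : 0 < α)
    (f : ℝ → ℝ → ℝ)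
    (hf : ContDiff ℝ 1 (Function.uncurry f))
    (hfu : ∀ x ∈ Icc (0 : ℝ) 1, ∀ s : ℝ, α ≤ deriv (fun t => f x t) s)
    (u : ℝ → ℝ)
    (hu : ∀ x ∈ Icc (0 : ℝ) 1, DifferentiableAt ℝ u x)
    (hu' : ∀ x ∈ Icc (0 : ℝ) 1, DifferentiableAt ℝ (deriv u) x)
    (heq : ∀ x ∈ Icc (0 : ℝ) 1,
      (ε + x) ^ 2 * deriv (deriv u) x - f x (u x) = 0)
    (hu0 : u 0 = A) (hu1 : u 1 = B) :
    ∀ x ∈ Icc (0 : ℝ) 1,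
      |u x| ≤ max |A| (max |B|
        ((1 / α) * sSup ((fun y => |f y 0|) '' Icc 0 1))) := by
  subst hu0 hu1
  have hIoo {x : ℝ} (hx : x ∈ Ioo (0 : ℝ) 1) : x ∈ Icc (0 : ℝ) 1 := Ioo_subset_Icc_self hx
  have hfx (x : ℝ) : Differentiable ℝ (f x) :=
    (hf.differentiable one_ne_zero).comp (by fun_prop : Differentiable ℝ fun s => (x, s))
  have hf0 : Continuous fun y => |f y 0| := (hf.continuous.comp (.prodMk_left 0)).abs
  exact statement11_general hα (fun x hx => monotone_sub_mul_of_le_deriv (hfx x) (hfu x (hIoo hx)))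
    (isCompact_Icc.image hf0).bddAbove (fun x _ => sq_nonneg (ε + x))
    (fun x hx => (hu x hx).continuousAt.continuousWithinAt)
    (fun x hx => (hu x (hIoo hx)).hasDerivAt) (fun x hx => (hu' x (hIoo hx)).hasDerivAt)
    (fun x hx => heq x (hIoo hx))
end
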